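/- arXiv:2405.14961 — 2 statements merged into one kernel-verified Lean document; each statement's English description precedes it below -/
import Mathlib

section
/- Flexible sub-sequence distillation (Appendix A.4, Section 3.6 of the paper). Let α : ℕ → ℝ be an antitone sequence with α 0 = 1 and 0 < α t ≤ 1 for all t, let φ : ℕ → ℕ be strictly monotone with φ 0 = 0, and let x₀ ∈ ℝ. Define the teacher marginals μ : ℕ → Measure ℝ by μ 0 = Dirac x₀ and μ s = (μ (s−1)).bind (fun x => gaussianReal (√(α s / α (s−1)) · x) (1 − α s / α (s−1))), and the student marginals ν : ℕ → Measure ℝ by ν 0 = Dirac x₀ and ν t = (ν (t−1)).bind (fun x => gaussianReal (√(α (φ t) / α (φ (t−1))) · x) (1 − α (φ t) / α (φ (t−1)))). Then for every t, ν t = gaussianReal (√(α (φ t)) · x₀) (1 − α (φ t)), and consequently ν t = μ (φ t). -/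
open MeasureTheory ProbabilityTheory

/-!
The transition kernel `x ↦ N(√r x, 1 - r)` is multiplicative in the signal ratio `r ∈ [0, 1]`:
applying it with ratio `s` and then with ratio `r` gives a mean factor `√r √s = √(r s)` and a
variance `r (1 - s) + (1 - r) = 1 - r s`. The ratios along a chain therefore telescope, so its
`t`-th marginal depends on the schedule only through its values at `0` and `t`. Skipping steps
of the teacher's schedule leaves these two values, and hence the marginal, unchanged.
-/

section Convolution

variable {Ω M : Type*} [MeasurableSpace Ω] [AddMonoid M] [MeasurableSpace M] [MeasurableAdd₂ M]

lemma bind_map_const_add_eq_map_conv (ρ : Measure Ω) (η : Measure M) [SFinite η]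
    {f : Ω → M} (hf : Measurable f) :
    ρ.bind (fun ω => η.map (f ω + ·)) = ρ.map f ∗ η := by
  have hkernel : Measurable fun ω => η.map (f ω + ·) := by
    have hsum : Measurable fun ω => (η.map (Prod.mk (f ω))).map fun p : M × M => p.1 + p.2 :=
      (Measure.measurable_map _ measurable_add).comp (Measurable.map_prodMk_left.comp hf)
    simpa only [Measure.map_map measurable_add measurable_prodMk_left, Function.comp_def] using hsum
  refine Measure.ext_of_lintegral _ fun g hg => ?_
  rw [Measure.lintegral_bind hkernel.aemeasurable hg.aemeasurable, Measure.lintegral_conv hg,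
    lintegral_map (by fun_prop) hf]
  exact lintegral_congr fun ω => lintegral_map hg (measurable_const_add (f ω))

end Convolution

lemma measurable_gaussianReal_const_mul (c : ℝ) (v : NNReal) :
    Measurable fun x : ℝ => gaussianReal (c * x) v :=
  measurable_gaussianReal.comp (f := fun x : ℝ => (c * x, v)) (by fun_prop)

lemma bind_gaussianReal_const_mul_eq_map_conv (ρ : Measure ℝ) (c : ℝ) (v : NNReal) :
    ρ.bind (fun x => gaussianReal (c * x) v) = ρ.map (c * ·) ∗ gaussianReal 0 v := by
  rw [← bind_map_const_add_eq_map_conv ρ (gaussianReal 0 v) (measurable_const_mul c)]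
  simp only [gaussianReal_map_const_add, zero_add]

lemma gaussianReal_bind_gaussianReal_const_mul (m c : ℝ) (v w : NNReal) :
    (gaussianReal m v).bind (fun x => gaussianReal (c * x) w)
      = gaussianReal (c * m) (.mk (c ^ 2) (sq_nonneg c) * v + w) := by
  rw [bind_gaussianReal_const_mul_eq_map_conv, gaussianReal_map_const_mul,
    gaussianReal_conv_gaussianReal, add_zero]

/-- The variance-preserving transition kernel `x ↦ N(√r x, 1 - r)` of a diffusion model with
signal ratio `r`. It has this meaning for `r ∈ [0, 1]`; outside that interval `√r` or the variance
is truncated to `0`. -/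
noncomputable def noisingKernel (r : ℝ) : Kernel ℝ ℝ where
  toFun x := gaussianReal (Real.sqrt r * x) (1 - r).toNNReal
  measurable' := measurable_gaussianReal_const_mul _ _

lemma noisingKernel_apply (r x : ℝ) :
    noisingKernel r x = gaussianReal (Real.sqrt r * x) (1 - r).toNNReal :=
  rfl

lemma noisingKernel_one : noisingKernel 1 = Kernel.id := by
  ext1 x
  simp [noisingKernel_apply, Kernel.id_apply]

lemma noisingKernel_comp_noisingKernel {r s : ℝ} (hr0 : 0 ≤ r) (hr1 : r ≤ 1) (hs1 : s ≤ 1) :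
    noisingKernel r ∘ₖ noisingKernel s = noisingKernel (r * s) := by
  have hvar : NNReal.mk (Real.sqrt r ^ 2) (sq_nonneg _) * (1 - s).toNNReal + (1 - r).toNNReal
      = (1 - r * s).toNNReal := by
    have hs : 0 ≤ 1 - s := sub_nonneg.mpr hs1
    have hr : 0 ≤ 1 - r := sub_nonneg.mpr hr1
    rw [← Real.toNNReal_of_nonneg, Real.sq_sqrt hr0, ← Real.toNNReal_mul hr0,
      ← Real.toNNReal_add (mul_nonneg hr0 hs) hr]
    congr 1
    ring
  ext1 x
  calc (noisingKernel r ∘ₖ noisingKernel s) x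
      = (gaussianReal (Real.sqrt s * x) (1 - s).toNNReal).bind
          (fun y => gaussianReal (Real.sqrt r * y) (1 - r).toNNReal) := Kernel.comp_apply _ _ _
    _ = gaussianReal (Real.sqrt (r * s) * x) (1 - r * s).toNNReal := by
      rw [gaussianReal_bind_gaussianReal_const_mul, hvar, Real.sqrt_mul hr0, mul_assoc]
    _ = noisingKernel (r * s) x := (noisingKernel_apply _ _).symm

/-- `μ` is the sequence of marginals of a forward (noising) process with cumulative signal
schedule `α`, so that step `s` has signal ratio `α (s + 1) / α s`. The initial law `μ 0` is left
free, so that it can be a single data point or a whole data distribution. -/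
def IsNoisingChain (α : ℕ → ℝ) (μ : ℕ → Measure ℝ) : Prop :=
  ∀ s, μ (s + 1) = noisingKernel (α (s + 1) / α s) ∘ₘ μ s

lemma IsNoisingChain.eq_noisingKernel_comp {α : ℕ → ℝ} {μ : ℕ → Measure ℝ}
    (hμ : IsNoisingChain α μ) (hanti : Antitone α) (hpos : ∀ t, 0 < α t) (t : ℕ) :
    μ t = noisingKernel (α t / α 0) ∘ₘ μ 0 := by
  induction t with
  | zero => rw [div_self (hpos 0).ne', noisingKernel_one, Measure.id_comp]
  | succ t ih =>
    have hratio {i j : ℕ} (hij : i ≤ j) : α j / α i ≤ 1 := (div_le_one (hpos i)).mpr (hanti hij)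
    have hstep : 0 ≤ α (t + 1) / α t := (div_pos (hpos _) (hpos _)).le
    rw [hμ t, ih, Measure.comp_assoc,
      noisingKernel_comp_noisingKernel hstep (hratio t.le_succ) (hratio t.zero_le),
      div_mul_div_cancel₀ (hpos t).ne']

theorem flexible_subsequence_distillation_general {α : ℕ → ℝ} (hanti : Antitone α)
    (hpos : ∀ t, 0 < α t) {φ : ℕ → ℕ} (hφ : Monotone φ) (hφ0 : φ 0 = 0)
    {μ ν : ℕ → Measure ℝ} (hμ : IsNoisingChain α μ) (hν : IsNoisingChain (α ∘ φ) ν)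
    (hν0 : ν 0 = μ 0) (t : ℕ) :
    ν t = noisingKernel (α (φ t) / α 0) ∘ₘ μ 0 ∧ ν t = μ (φ t) := by
  have hνt : ν t = noisingKernel (α (φ t) / α 0) ∘ₘ μ 0 := by
    simpa only [Function.comp_apply, hφ0, hν0] using
      hν.eq_noisingKernel_comp (hanti.comp_monotone hφ) (fun s => hpos (φ s)) t
  exact ⟨hνt, hνt.trans (hμ.eq_noisingKernel_comp hanti hpos (φ t)).symm⟩

/-- Flexible sub-sequence distillation (Appendix A.4): for any strictly increasing sub-sequence
`φ` of step indices with `φ 0 = 0`, the student's `t`-step marginal is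
`N(√(α (φ t))·x₀, 1 − α (φ t))`, hence equals the teacher's `(φ t)`-step marginal. -/
theorem flexible_subsequence_distillation (α : ℕ → ℝ) (hanti : Antitone α) (hα0 : α 0 = 1)
    (hpos : ∀ t, 0 < α t) (hle : ∀ t, α t ≤ 1)
    (φ : ℕ → ℕ) (hφ : StrictMono φ) (hφ0 : φ 0 = 0) (x₀ : ℝ)
    (μ : ℕ → Measure ℝ) (hμ0 : μ 0 = Measure.dirac x₀)
    (hμ : ∀ s, 1 ≤ s → μ s = (μ (s - 1)).bind
      (fun x => gaussianReal (Real.sqrt (α s / α (s - 1)) * x) ((1 - α s / α (s - 1)).toNNReal)))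
    (ν : ℕ → Measure ℝ) (hν0 : ν 0 = Measure.dirac x₀)
    (hν : ∀ t, 1 ≤ t → ν t = (ν (t - 1)).bind
      (fun x => gaussianReal (Real.sqrt (α (φ t) / α (φ (t - 1))) * x)
        ((1 - α (φ t) / α (φ (t - 1))).toNNReal))) :
    ∀ t, ν t = gaussianReal (Real.sqrt (α (φ t)) * x₀) ((1 - α (φ t)).toNNReal)
      ∧ ν t = μ (φ t) := by
  have hμ_chain : IsNoisingChain α μ := fun s => hμ (s + 1) s.succ_pos
  have hν_chain : IsNoisingChain (α ∘ φ) ν := fun t => hν (t + 1) t.succ_pos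
  simpa only [hμ0, hα0, div_one, Measure.dirac_bind (noisingKernel _).measurable,
    noisingKernel_apply] using
    flexible_subsequence_distillation_general hanti hpos hφ.monotone hφ0 hμ_chain hν_chain
      (hν0.trans hμ0.symm)
end

section
/- Per-step KL between the forward posterior and the parameterized reverse step equals the weighted noise-prediction error (combining Eqs. (9), (12)–(14) with Appendix A.3). Let a, b be real numbers with 0 < a < b < 1 and let x₀, ε, ε̂ ∈ ℝ. Set x = √a·x₀ + √(1−a)·ε, f = (x − √(1−a)·ε̂)/√a, μ̃ = ((1−b)·√a/((1−a)·√b))·x + ((b−a)/((1−a)·√b))·x₀, μ = ((1−b)·√a/((1−a)·√b))·x + ((b−a)/((1−a)·√b))·f, and σ' = (1−b)(b−a)/((1−a)·b). Then klDiv (gaussianReal μ̃ σ') (gaussianReal μ σ') = ENNReal.ofReal (((b−a)/(2·a·(1−b))) · (ε − ε̂)²). -/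
open MeasureTheory ProbabilityTheory
open scoped ENNReal NNReal Classical

/-- Kullback–Leibler divergence `∫ log (dμ/dν) dμ`, valued in `ℝ≥0∞` (it is `∞` when `μ` is not
absolutely continuous w.r.t. `ν` or when the log-likelihood ratio is not integrable). -/
noncomputable def klDiv {α : Type*} [MeasurableSpace α] (μ ν : Measure α) : ℝ≥0∞ :=
  if μ ≪ ν ∧ Integrable (llr μ ν) μ then ENNReal.ofReal (∫ x, llr μ ν x ∂μ) else ∞

/-!
Two Gaussians of the same variance `v` whose means differ by `d` have divergence `d ^ 2 / (2 * v)`.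
The forward posterior and the reverse step have the same variance, and their means are the same
affine function of the current state and of the clean sample, evaluated at the true `x₀` and at its
estimate `f` respectively. The divergence is thus a multiple of `(x₀ - f) ^ 2`, and since `x₀` and
`f` are both obtained from the same noisy sample by removing noise,
`f - x₀ = √(1 - a) / √a * (ε - ε̂)`.
-/

section KullbackLeibler

variable {α : Type*} [MeasurableSpace α] {μ ν : Measure α}

lemma klDiv_eq_ofReal_integral_of_llr_ae_eq {g : α → ℝ} (hμν : μ ≪ ν)
    (hllr : llr μ ν =ᵐ[μ] g) (hg : Integrable g μ) :
    klDiv μ ν = ENNReal.ofReal (∫ x, g x ∂μ) := by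
  rw [klDiv, if_pos ⟨hμν, hg.congr hllr.symm⟩, integral_congr_ae hllr]

lemma llr_ae_eq_llr_sub_llr {κ : Measure α} [SigmaFinite μ] [SigmaFinite ν] [SigmaFinite κ]
    (hμν : μ ≪ ν) (hνκ : ν ≪ κ) :
    llr μ ν =ᵐ[μ] fun x ↦ llr μ κ x - llr ν κ x := by
  filter_upwards [(hμν.trans hνκ).ae_le (Measure.rnDeriv_mul_rnDeriv (κ := κ) hμν),
    Measure.rnDeriv_pos hμν, hμν.ae_le (Measure.rnDeriv_lt_top μ ν),
    hμν.ae_le (Measure.rnDeriv_pos hνκ), (hμν.trans hνκ).ae_le (Measure.rnDeriv_lt_top ν κ)]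
    with x chain μν_pos μν_lt_top νκ_pos νκ_lt_top
  have log_chain : llr μ κ x = llr μ ν x + llr ν κ x := by
    rw [llr, ← chain, Pi.mul_apply, ENNReal.toReal_mul,
      Real.log_mul (ENNReal.toReal_pos μν_pos.ne' μν_lt_top.ne).ne'
        (ENNReal.toReal_pos νκ_pos.ne' νκ_lt_top.ne).ne', llr, llr]
  rw [log_chain, add_sub_cancel_right]

end KullbackLeibler

lemma integral_sub_sq_eq_variance_add_sq {Ω : Type*} [MeasurableSpace Ω] {P : Measure Ω}
    [IsProbabilityMeasure P] {X : Ω → ℝ} (hX : MemLp X 2 P) (c : ℝ) :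
    ∫ ω, (X ω - c) ^ 2 ∂P = Var[X; P] + (P[X] - c) ^ 2 := by
  have mean_sub : ∫ ω, (X ω - c) ∂P = P[X] - c := by
    simp [integral_sub (hX.integrable one_le_two) (integrable_const c)]
  have var_sub := variance_eq_sub (hX.sub (memLp_const c))
  simp only [Pi.sub_def, Pi.pow_def, mean_sub, variance_sub_const hX.aestronglyMeasurable]
    at var_sub
  linarith

section Gaussian

variable {v w : ℝ≥0}

lemma log_gaussianPDFReal (m : ℝ) (hv : v ≠ 0) (x : ℝ) :
    Real.log (gaussianPDFReal m v x)
      = -Real.log (2 * Real.pi * v) / 2 - (x - m) ^ 2 / (2 * v) := by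
  rw [gaussianPDFReal, Real.log_mul (by positivity) (Real.exp_ne_zero _), Real.log_inv,
    Real.log_sqrt (by positivity), Real.log_exp]
  ring

lemma llr_gaussianReal_volume (m : ℝ) (v : ℝ≥0) :
    llr (gaussianReal m v) volume =ᵐ[volume] fun x ↦ Real.log (gaussianPDFReal m v x) := by
  filter_upwards [rnDeriv_gaussianReal m v] with x density
  rw [llr, density, toReal_gaussianPDF]

lemma gaussianReal_absolutelyContinuous_gaussianReal (m n : ℝ) (hv : v ≠ 0) (hw : w ≠ 0) :
    gaussianReal m v ≪ gaussianReal n w :=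
  (gaussianReal_absolutelyContinuous m hv).trans (gaussianReal_absolutelyContinuous' n hw)

lemma llr_gaussianReal (m n : ℝ) (hv : v ≠ 0) (hw : w ≠ 0) :
    llr (gaussianReal m v) (gaussianReal n w) =ᵐ[gaussianReal m v]
      fun x ↦ Real.log (w / v) / 2 + (x - n) ^ 2 / (2 * w) - (x - m) ^ 2 / (2 * v) := by
  have ac_volume := gaussianReal_absolutelyContinuous m hv
  filter_upwards [llr_ae_eq_llr_sub_llr (gaussianReal_absolutelyContinuous_gaussianReal m n hv hw)
      (gaussianReal_absolutelyContinuous n hw),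
    ac_volume.ae_le (llr_gaussianReal_volume m v), ac_volume.ae_le (llr_gaussianReal_volume n w)]
    with x llr_eq_sub llr_left llr_right
  have hv' : (v : ℝ) ≠ 0 := mod_cast hv
  have hw' : (w : ℝ) ≠ 0 := mod_cast hw
  rw [llr_eq_sub, llr_left, llr_right, log_gaussianPDFReal m hv, log_gaussianPDFReal n hw,
    Real.log_mul (by positivity) hv', Real.log_mul (by positivity) hw', Real.log_div hw' hv']
  ring

lemma integrable_sub_sq_gaussianReal (m : ℝ) (v : ℝ≥0) (c : ℝ) :
    Integrable (fun x ↦ (x - c) ^ 2) (gaussianReal m v) :=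
  ((memLp_id_gaussianReal 2).sub (memLp_const c)).integrable_sq

lemma integral_sub_sq_gaussianReal (m : ℝ) (v : ℝ≥0) (c : ℝ) :
    ∫ x, (x - c) ^ 2 ∂gaussianReal m v = v + (m - c) ^ 2 := by
  simpa using integral_sub_sq_eq_variance_add_sq
    (memLp_id_gaussianReal (μ := m) (v := v) 2) c

theorem klDiv_gaussianReal (m n : ℝ) (hv : v ≠ 0) (hw : w ≠ 0) :
    klDiv (gaussianReal m v) (gaussianReal n w)
      = ENNReal.ofReal ((Real.log (w / v) + (v + (m - n) ^ 2) / w - 1) / 2) := by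
  have int_n := (integrable_sub_sq_gaussianReal m v n).div_const (2 * w)
  have int_m := (integrable_sub_sq_gaussianReal m v m).div_const (2 * v)
  have int_log_add :
      Integrable (fun x ↦ Real.log (w / v) / 2 + (x - n) ^ 2 / (2 * w)) (gaussianReal m v) :=
    (integrable_const _).add int_n
  rw [klDiv_eq_ofReal_integral_of_llr_ae_eq
      (gaussianReal_absolutelyContinuous_gaussianReal m n hv hw) (llr_gaussianReal m n hv hw)
      (int_log_add.sub int_m),
    integral_sub int_log_add int_m, integral_add (integrable_const _) int_n, integral_const,
    integral_div, integral_div, integral_sub_sq_gaussianReal, integral_sub_sq_gaussianReal,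
    probReal_univ, one_smul]
  congr 1
  field_simp
  ring

lemma klDiv_gaussianReal_of_var_eq (m n : ℝ) (hv : v ≠ 0) :
    klDiv (gaussianReal m v) (gaussianReal n v) = ENNReal.ofReal ((m - n) ^ 2 / (2 * v)) := by
  have hv' : (v : ℝ) ≠ 0 := mod_cast hv
  rw [klDiv_gaussianReal m n hv hv, div_self hv', Real.log_one]
  congr 1
  field_simp
  ring

end Gaussian

section Diffusion

/-- The forward process at signal level `a`: the clean sample `x₀` corrupted by the noise `ε`. -/
noncomputable def forwardSample (a x₀ ε : ℝ) : ℝ :=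
  √a * x₀ + √(1 - a) * ε

/-- The predictor `f_Θ`: the estimate of the clean sample obtained from the noisy sample `x` at
signal level `a` by removing the predicted noise `e`. -/
noncomputable def cleanEstimate (a x e : ℝ) : ℝ :=
  (x - √(1 - a) * e) / √a

/-- The mean of the step from signal level `a` to signal level `b`, given the current state `x` and
the clean sample `y`. The forward posterior has `y = x₀`, the reverse step `y = f_Θ x`. -/
noncomputable def posteriorMean (a b x y : ℝ) : ℝ :=
  ((1 - b) * √a / ((1 - a) * √b)) * x + ((b - a) / ((1 - a) * √b)) * y

/-- The variance `σ'` of the step from signal level `a` to signal level `b`, common to the forward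
posterior and the reverse step. -/
noncomputable def posteriorVariance (a b : ℝ) : ℝ :=
  (1 - b) * (b - a) / ((1 - a) * b)

variable {a b : ℝ}

lemma sub_cleanEstimate_forwardSample (ha : 0 < a) (x₀ ε e : ℝ) :
    x₀ - cleanEstimate a (forwardSample a x₀ ε) e = -(√(1 - a) * (ε - e) / √a) := by
  have sqrt_ne_zero : √a ≠ 0 := (Real.sqrt_pos.2 ha).ne'
  rw [cleanEstimate, forwardSample]
  field_simp
  ring

lemma sq_sub_cleanEstimate_forwardSample (ha : 0 < a) (ha1 : a ≤ 1) (x₀ ε e : ℝ) :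
    (x₀ - cleanEstimate a (forwardSample a x₀ ε) e) ^ 2 = (1 - a) / a * (ε - e) ^ 2 := by
  rw [sub_cleanEstimate_forwardSample ha, neg_sq, div_pow, mul_pow, Real.sq_sqrt ha.le,
    Real.sq_sqrt (sub_nonneg.2 ha1)]
  ring

lemma posteriorMean_sub_posteriorMean (a b x y z : ℝ) :
    posteriorMean a b x y - posteriorMean a b x z = (b - a) / ((1 - a) * √b) * (y - z) := by
  rw [posteriorMean, posteriorMean]
  ring

lemma posteriorVariance_pos (hb0 : 0 < b) (hab : a < b) (hb1 : b < 1) :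
    0 < posteriorVariance a b :=
  div_pos (mul_pos (sub_pos.2 hb1) (sub_pos.2 hab)) (mul_pos (sub_pos.2 (hab.trans hb1)) hb0)

theorem klDiv_gaussianReal_posteriorMean (hb0 : 0 < b) (hab : a < b) (hb1 : b < 1) (x y z : ℝ) :
    klDiv (gaussianReal (posteriorMean a b x y) (posteriorVariance a b).toNNReal)
        (gaussianReal (posteriorMean a b x z) (posteriorVariance a b).toNNReal)
      = ENNReal.ofReal ((b - a) / (2 * (1 - a) * (1 - b)) * (y - z) ^ 2) := by
  have variance_pos := posteriorVariance_pos hb0 hab hb1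
  have one_sub_a_pos : 0 < 1 - a := sub_pos.2 (hab.trans hb1)
  have one_sub_b_pos : 0 < 1 - b := sub_pos.2 hb1
  have b_sub_a_pos : 0 < b - a := sub_pos.2 hab
  rw [klDiv_gaussianReal_of_var_eq _ _ (Real.toNNReal_pos.2 variance_pos).ne',
    Real.coe_toNNReal _ variance_pos.le, posteriorMean_sub_posteriorMean, mul_pow, div_pow,
    mul_pow, Real.sq_sqrt hb0.le, posteriorVariance]
  congr 1
  field_simp

end Diffusion

/-- Per-step KL between the forward posterior `q'(x'_{t−1} | x'_t, x'_0) = N(μ̃, σ')` and the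
parameterized reverse step `p'_Θ(x'_{t−1} | x'_t) = N(μ, σ')` equals the weighted
noise-prediction error `((b−a)/(2a(1−b))) · (ε − ε̂)²`. -/
theorem klDiv_posterior_reverse_eq_noise_loss (a b x₀ ε εhat : ℝ)
    (ha : 0 < a) (hab : a < b) (hb : b < 1) :
    let x := Real.sqrt a * x₀ + Real.sqrt (1 - a) * ε
    let f := (x - Real.sqrt (1 - a) * εhat) / Real.sqrt a
    let μtilde := ((1 - b) * Real.sqrt a / ((1 - a) * Real.sqrt b)) * x
      + ((b - a) / ((1 - a) * Real.sqrt b)) * x₀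
    let μ := ((1 - b) * Real.sqrt a / ((1 - a) * Real.sqrt b)) * x
      + ((b - a) / ((1 - a) * Real.sqrt b)) * f
    let σ' := (1 - b) * (b - a) / ((1 - a) * b)
    klDiv (gaussianReal μtilde σ'.toNNReal) (gaussianReal μ σ'.toNNReal)
      = ENNReal.ofReal (((b - a) / (2 * a * (1 - b))) * (ε - εhat) ^ 2) := by
  intro x f μtilde μ σ'
  have one_sub_a_pos : 0 < 1 - a := sub_pos.2 (hab.trans hb)
  have sq_error : (x₀ - f) ^ 2 = (1 - a) / a * (ε - εhat) ^ 2 :=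
    sq_sub_cleanEstimate_forwardSample ha (hab.trans hb).le x₀ ε εhat
  calc klDiv (gaussianReal μtilde σ'.toNNReal) (gaussianReal μ σ'.toNNReal)
      = ENNReal.ofReal ((b - a) / (2 * (1 - a) * (1 - b)) * (x₀ - f) ^ 2) :=
        klDiv_gaussianReal_posteriorMean (ha.trans hab) hab hb x x₀ f
    _ = ENNReal.ofReal (((b - a) / (2 * a * (1 - b))) * (ε - εhat) ^ 2) := by
        rw [sq_error]
        congr 1
        field_simp
end
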